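/- Let ℰ = (E, ≤, ⊕) be an event structure with E finite and nonempty. Then there exists an occurrence net, namely the constructed net η[ℰ] = (B, E, G), such that ξ[η[ℰ]] = ℰ, i.e. the events of η[ℰ] are exactly those of ℰ, the relation G* restricted to E × E equals ≤, and the conflict relation of η[ℰ] restricted to E × E equals ⊕. -/

import Mathlib

open Relation Sum

/-- The preset `•x` of a node of a net with flow relation `flow`. -/
def preset {C E : Type*} (flow : (C ⊕ E) → (C ⊕ E) → Prop) (x : C ⊕ E) : Set (C ⊕ E) :=
  {y | flow y x}

/-- The postset `x•` of a node of a net with flow relation `flow`. -/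
def postset {C E : Type*} (flow : (C ⊕ E) → (C ⊕ E) → Prop) (x : C ⊕ E) : Set (C ⊕ E) :=
  {y | flow x y}

/-- Causal relation `x ⇝ y` iff `(x,y) ∈ G⁺`. -/
def Causal {C E : Type*} (flow : (C ⊕ E) → (C ⊕ E) → Prop) (x y : C ⊕ E) : Prop :=
  TransGen flow x y

/-- Conflict `x # y` : two distinct events with a common pre-node reach `x` and `y`. -/
def InConflict {C E : Type*} (flow : (C ⊕ E) → (C ⊕ E) → Prop) (x y : C ⊕ E) : Prop :=
  ∃ t₁ t₂ : E, t₁ ≠ t₂ ∧ (preset flow (inr t₁) ∩ preset flow (inr t₂)).Nonempty ∧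
    ReflTransGen flow (inr t₁) x ∧ ReflTransGen flow (inr t₂) y

/-- Concurrency `x ∥ y` : neither causal (either way) nor conflict. -/
def Concurrent {C E : Type*} (flow : (C ⊕ E) → (C ⊕ E) → Prop) (x y : C ⊕ E) : Prop :=
  ¬ Causal flow x y ∧ ¬ Causal flow y x ∧ ¬ InConflict flow x y

/-- The flow relation only connects conditions to events and events to conditions. -/
def IsNet {C E : Type*} (flow : (C ⊕ E) → (C ⊕ E) → Prop) : Prop :=
  ∀ x y, flow x y → (∃ (b : C) (e : E), x = inl b ∧ y = inr e) ∨
    ∃ (e : E) (b : C), x = inr e ∧ y = inl b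

/-- Occurrence net: every condition has at most one pre-event, the net is acyclic,
every node has finitely many causal predecessors, no event is in self-conflict. -/
def IsOccurrenceNet {C E : Type*} (flow : (C ⊕ E) → (C ⊕ E) → Prop) : Prop :=
  IsNet flow ∧
  (∀ b : C, (preset flow (inl b)).Subsingleton) ∧
  Irreflexive (Causal flow) ∧
  (∀ x : C ⊕ E, {y | Causal flow y x}.Finite) ∧
  ∀ e : E, ¬ InConflict flow (inr e) (inr e)

/-- An event structure `(E, ≤, ⊕)`: `≤` is a partial order, `⊕` is symmetric and
irreflexive, and conflict heredity holds. -/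
def IsEventStructure {E : Type*} (le conf : E → E → Prop) : Prop :=
  IsPartialOrder E le ∧ Symmetric conf ∧ Irreflexive conf ∧
  ∀ e₁ e₂ e₃ : E, le e₂ e₁ → conf e₂ e₃ → conf e₁ e₃

/-- `CE` : the subsets of `E` whose distinct elements are pairwise in conflict. -/
def CESet {E : Type*} (conf : E → E → Prop) : Set (Set E) :=
  {x | ∀ e₁ ∈ x, ∀ e₂ ∈ x, e₁ ≠ e₂ → conf e₁ e₂}

/-- The conditions of `η[ℰ]` : pairs `⟨e,x⟩` with `e ∈ E`, `x ∈ CE`,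
`∀ e' ∈ x, e ≤ e' ∧ e ≠ e'`, encoded as `(some e, x)`, and pairs `⟨0,x⟩` with
`x ∈ CE`, `x ≠ ∅`, encoded as `(none, x)`. -/
def EtaCond {E : Type*} (le conf : E → E → Prop) : Set (Option E × Set E) :=
  {p | p.2 ∈ CESet conf ∧
    ((∃ e : E, p.1 = some e ∧ ∀ e' ∈ p.2, le e e' ∧ e ≠ e') ∨
     (p.1 = none ∧ p.2.Nonempty))}

/-- The flow relation of `η[ℰ]` : a condition `⟨e,x⟩` (or `⟨0,x⟩`) flows to each
event in `x`, and an event `e` flows to each condition `⟨e,x⟩`. -/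
def EtaFlow {E : Type*} (le conf : E → E → Prop) :
    (↥(EtaCond le conf) ⊕ E) → (↥(EtaCond le conf) ⊕ E) → Prop :=
  fun x y =>
    match x, y with
    | inl b, inr e' => e' ∈ (b : Option E × Set E).2
    | inr e, inl b => (b : Option E × Set E).1 = some e
    | _, _ => False

/-!
Each condition of `η[ℰ]` has at most one producer, which lies strictly below all of its consumers,
and the consumers are pairwise in conflict. Hence one step from an event through a condition to
another event goes strictly up in `≤`, and every strict inequality `e < e'` is such a step, through
`⟨e, {e'}⟩`. As `<` is transitive, `G⁺` restricted to events is `<`. Distinct events share a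
precondition exactly when they are in conflict, `⟨0, {e, e'}⟩` being a witness, so heredity
identifies the net conflict with `⊕`. If every event has finitely many causes and conflicts, it has
finitely many preconditions: such a precondition `⟨f, x⟩` of `e` has `f = 0` or `f < e`, and
`x ⊆ {e} ∪ {g | e ⊕ g}`.
-/

section Net

variable {C E : Type*} {flow : (C ⊕ E) → (C ⊕ E) → Prop}

/-- Immediate causality between events of a net: some condition is produced by `e` and consumed
by `e'`. Its transitive closure is the causal relation of the net restricted to events. -/
def EventStep (flow : (C ⊕ E) → (C ⊕ E) → Prop) (e e' : E) : Prop :=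
  ∃ b : C, flow (inr e) (inl b) ∧ flow (inl b) (inr e')

namespace IsNet

theorem exists_eq_inr_of_flow_inl (hN : IsNet flow) {x : C ⊕ E} {b : C}
    (h : flow x (inl b)) : ∃ e, x = inr e := by
  rcases hN _ _ h with ⟨_, _, _, hb⟩ | ⟨e, _, hx, _⟩
  · cases hb
  · exact ⟨e, hx⟩

theorem exists_eq_inl_of_flow_inr (hN : IsNet flow) {x : C ⊕ E} {e : E}
    (h : flow x (inr e)) : ∃ b, x = inl b := by
  rcases hN _ _ h with ⟨b, _, hx, _⟩ | ⟨_, _, _, he⟩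
  · exact ⟨b, hx⟩
  · cases he

theorem causal_inr_inr_iff (hN : IsNet flow) {e e' : E} :
    Causal flow (inr e) (inr e') ↔ TransGen (EventStep flow) e e' := by
  constructor
  · intro h
    suffices reach : ∀ y, Causal flow (inr e) y →
        Sum.elim (fun b => ∃ f, ReflTransGen (EventStep flow) e f ∧ flow (inr f) (inl b))
          (TransGen (EventStep flow) e) y from reach _ h
    intro y hy
    induction hy with
    | single hstep =>
      rcases hN _ _ hstep with ⟨_, _, h, _⟩ | ⟨_, b, _, rfl⟩
      · cases h
      · exact ⟨e, .refl, hstep⟩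
    | tail _ hstep ih =>
      rcases hN _ _ hstep with ⟨b, e', rfl, rfl⟩ | ⟨f, b, rfl, rfl⟩
      · obtain ⟨f, hef, hfb⟩ := ih
        exact .tail' hef ⟨b, hfb, hstep⟩
      · exact ⟨f, ih.to_reflTransGen, hstep⟩
  · intro h
    induction h with
    | single hstep =>
      obtain ⟨b, heb, hbf⟩ := hstep
      exact .tail (.single heb) hbf
    | tail _ hstep ih =>
      obtain ⟨b, hfb, hbg⟩ := hstep
      exact .tail (.tail ih hfb) hbg

theorem not_causal_self (hN : IsNet flow) (h : ∀ e : E, ¬ Causal flow (inr e) (inr e))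
    (x : C ⊕ E) : ¬ Causal flow x x := by
  intro hcycle
  rcases x with b | e
  · obtain ⟨x, hbx, hxb⟩ := TransGen.tail'_iff.1 hcycle
    obtain ⟨e, rfl⟩ := hN.exists_eq_inr_of_flow_inl hxb
    exact h e (.head' hxb hbx)
  · exact h e hcycle

theorem finite_reflTransGen_inr (hN : IsNet flow) {e : E}
    (hevents : {f : E | ReflTransGen flow (inr f) (inr e)}.Finite)
    (hpre : ∀ f : E, (preset flow (inr f)).Finite) :
    {y | ReflTransGen flow y (inr e)}.Finite := by
  refine ((hevents.image inr).union (hevents.biUnion fun f _ => hpre f)).subset ?_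
  rintro (b | f) hy
  · obtain h | ⟨x, hbx, hxe⟩ := hy.cases_head
    · cases h
    rcases hN _ _ hbx with ⟨_, f, _, rfl⟩ | ⟨_, _, h, _⟩
    · exact .inr (Set.mem_biUnion hxe hbx)
    · cases h
  · exact .inl ⟨f, hy, rfl⟩

theorem finite_causal (hN : IsNet flow)
    (hevents : ∀ e : E, {f : E | ReflTransGen flow (inr f) (inr e)}.Finite)
    (hpreEvent : ∀ e : E, (preset flow (inr e)).Finite)
    (hpreCond : ∀ b : C, (preset flow (inl b)).Finite) (x : C ⊕ E) :
    {y | Causal flow y x}.Finite := by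
  have hevent (e : E) : {y | ReflTransGen flow y (inr e)}.Finite :=
    hN.finite_reflTransGen_inr (hevents e) hpreEvent
  rcases x with b | e
  · refine ((hpreCond b).biUnion (t := fun z => {y | ReflTransGen flow y z}) ?_).subset ?_
    · intro z hz
      obtain ⟨e, rfl⟩ := hN.exists_eq_inr_of_flow_inl hz
      exact hevent e
    · intro y hy
      obtain ⟨z, hyz, hzb⟩ := TransGen.tail'_iff.1 hy
      exact Set.mem_biUnion hzb hyz
  · exact (hevent e).subset fun y hy => hy.to_reflTransGen

end IsNet

end Net

namespace IsEventStructure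

variable {E : Type*} {le conf : E → E → Prop}

theorem isPartialOrder (hES : IsEventStructure le conf) : IsPartialOrder E le :=
  hES.1

theorem symm_conf (hES : IsEventStructure le conf) : Std.Symm conf :=
  ⟨hES.2.1⟩

theorem irrefl_conf (hES : IsEventStructure le conf) : Std.Irrefl conf :=
  ⟨hES.2.2.1⟩

theorem conf_of_le_of_le (hES : IsEventStructure le conf) {t t' e e' : E} (h : conf t t')
    (hte : le t e) (hte' : le t' e') : conf e e' := by
  obtain ⟨-, hsymm, -, hhered⟩ := hES
  have het' : conf e t' := hhered _ _ _ hte h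
  exact hsymm (hhered _ _ _ hte' (hsymm het'))

end IsEventStructure

section Eta

variable {E : Type*} {le conf : E → E → Prop}

theorem isNet_etaFlow : IsNet (EtaFlow le conf) := by
  rintro (b | e) (b' | e') h
  · exact h.elim
  · exact .inl ⟨b, e', rfl, rfl⟩
  · exact .inr ⟨e, b', rfl, rfl⟩
  · exact h.elim

theorem subsingleton_preset_etaFlow_inl (b : EtaCond le conf) :
    (preset (EtaFlow le conf) (inl b)).Subsingleton := by
  intro x hx y hy
  obtain ⟨e, rfl⟩ := isNet_etaFlow.exists_eq_inr_of_flow_inl hx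
  obtain ⟨e', rfl⟩ := isNet_etaFlow.exists_eq_inr_of_flow_inl hy
  have h : some e = some e' := Eq.trans (Eq.symm hx) hy
  rw [Option.some.inj h]

theorem lt_of_mem_etaCond {p : Option E × Set E} (hp : p ∈ EtaCond le conf) {e e' : E}
    (he : p.1 = some e) (he' : e' ∈ p.2) : le e e' ∧ e ≠ e' := by
  obtain ⟨-, ⟨f, hf, hlt⟩ | ⟨hnone, -⟩⟩ := hp
  · obtain rfl : e = f := Option.some.inj (he.symm.trans hf)
    exact hlt e' he'
  · cases he.symm.trans hnone

theorem some_singleton_mem_etaCond {e e' : E} (hle : le e e') (hne : e ≠ e') :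
    (some e, {e'}) ∈ EtaCond le conf := by
  refine ⟨?_, .inl ⟨e, rfl, ?_⟩⟩
  · rintro _ rfl _ rfl hne'
    exact absurd rfl hne'
  · rintro _ rfl
    exact ⟨hle, hne⟩

theorem none_pair_mem_etaCond [Std.Symm conf] {e e' : E} (h : conf e e') :
    (none, {e, e'}) ∈ EtaCond le conf := by
  refine ⟨?_, .inr ⟨rfl, Set.insert_nonempty _ _⟩⟩
  rintro _ (rfl | rfl) _ (rfl | rfl) hne
  · exact absurd rfl hne
  · exact h
  · exact symm h
  · exact absurd rfl hne

theorem eventStep_etaFlow_iff {e e' : E} :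
    EventStep (EtaFlow le conf) e e' ↔ le e e' ∧ e ≠ e' := by
  constructor
  · rintro ⟨b, heb, hbe'⟩
    exact lt_of_mem_etaCond b.2 heb hbe'
  · rintro ⟨hle, hne⟩
    exact ⟨⟨_, some_singleton_mem_etaCond hle hne⟩, rfl, rfl⟩

theorem causal_etaFlow_iff [IsTrans E le] [Std.Antisymm le] {e e' : E} :
    Causal (EtaFlow le conf) (inr e) (inr e') ↔ le e e' ∧ e ≠ e' := by
  have hstep : EventStep (EtaFlow le conf) = fun e e' => le e e' ∧ e ≠ e' := by
    ext
    exact eventStep_etaFlow_iff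
  have htrans : IsTrans E fun e e' => le e e' ∧ e ≠ e' := by
    refine ⟨fun a b c hab hbc => ⟨_root_.trans hab.1 hbc.1, ?_⟩⟩
    rintro rfl
    exact hab.2 (antisymm hab.1 hbc.1)
  rw [isNet_etaFlow.causal_inr_inr_iff, hstep, transGen_eq_self]

theorem reflTransGen_etaFlow_iff [IsPartialOrder E le] {e e' : E} :
    ReflTransGen (EtaFlow le conf) (inr e) (inr e') ↔ le e e' := by
  have hcausal : TransGen (EtaFlow le conf) (inr e) (inr e') ↔ le e e' ∧ e ≠ e' :=
    causal_etaFlow_iff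
  rw [reflTransGen_iff_eq_or_transGen, inr.injEq, hcausal]
  constructor
  · rintro (rfl | ⟨hle, -⟩)
    · exact refl _
    · exact hle
  · intro hle
    by_cases hne : e = e'
    · exact .inl hne.symm
    · exact .inr ⟨hle, hne⟩

theorem ne_and_nonempty_preset_inter_etaFlow_iff [Std.Symm conf] [Std.Irrefl conf]
    {e e' : E} :
    (e ≠ e' ∧ (preset (EtaFlow le conf) (inr e) ∩ preset (EtaFlow le conf) (inr e')).Nonempty) ↔
      conf e e' := by
  constructor
  · rintro ⟨hne, x, hx, hx'⟩
    obtain ⟨b, rfl⟩ := isNet_etaFlow.exists_eq_inl_of_flow_inr hx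
    exact b.2.1 e hx e' hx' hne
  · intro h
    refine ⟨?_, inl ⟨_, none_pair_mem_etaCond h⟩, .inl rfl, .inr rfl⟩
    rintro rfl
    exact irrefl e h

theorem inConflict_etaFlow_iff (hES : IsEventStructure le conf) {e e' : E} :
    InConflict (EtaFlow le conf) (inr e) (inr e') ↔ conf e e' := by
  have := hES.isPartialOrder
  have := hES.symm_conf
  have := hES.irrefl_conf
  constructor
  · rintro ⟨t, t', hne, hpre, hte, hte'⟩
    have htt' : conf t t' := ne_and_nonempty_preset_inter_etaFlow_iff.1 ⟨hne, hpre⟩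
    exact hES.conf_of_le_of_le htt' (reflTransGen_etaFlow_iff.1 hte)
      (reflTransGen_etaFlow_iff.1 hte')
  · intro h
    obtain ⟨hne, hpre⟩ := ne_and_nonempty_preset_inter_etaFlow_iff.2 h
    exact ⟨e, e', hne, hpre, .refl, .refl⟩

theorem finite_preset_etaFlow_inr {e : E} (hcauses : {f | le f e}.Finite)
    (hconflicts : {f | conf e f}.Finite) : (preset (EtaFlow le conf) (inr e)).Finite := by
  have hpairs : (insert none (some '' {f | le f e}) ×ˢ 𝒫 insert e {f | conf e f}).Finite :=
    ((hcauses.image some).insert none).prod (hconflicts.insert e).powerset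
  refine ((hpairs.preimage (f := ((↑) : EtaCond le conf → Option E × Set E))
    Subtype.val_injective.injOn).image inl).subset ?_
  intro x hx
  obtain ⟨⟨⟨o, s⟩, hb⟩, rfl⟩ := isNet_etaFlow.exists_eq_inl_of_flow_inr hx
  refine ⟨_, ⟨?_, ?_⟩, rfl⟩
  · cases o with
    | none => exact .inl rfl
    | some f => exact .inr ⟨f, (lt_of_mem_etaCond hb rfl hx).1, rfl⟩
  · intro f hf
    by_cases hef : e = f
    · exact .inl hef.symm
    · exact .inr (hb.1 e hx f hf hef)

theorem isOccurrenceNet_etaFlow (hES : IsEventStructure le conf)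
    (hcauses : ∀ e, {f | le f e}.Finite) (hconflicts : ∀ e, {f | conf e f}.Finite) :
    IsOccurrenceNet (EtaFlow le conf) := by
  have := hES.isPartialOrder
  refine ⟨isNet_etaFlow, subsingleton_preset_etaFlow_inl, ?acyclic, ?finitary, ?noSelfConflict⟩
  case acyclic =>
    exact isNet_etaFlow.not_causal_self fun e h => (causal_etaFlow_iff.1 h).2 rfl
  case finitary =>
    refine isNet_etaFlow.finite_causal ?_
      (fun e => finite_preset_etaFlow_inr (hcauses e) (hconflicts e))
      (fun b => (subsingleton_preset_etaFlow_inl b).finite)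
    simpa only [reflTransGen_etaFlow_iff] using hcauses
  case noSelfConflict =>
    exact fun e h => hES.irrefl_conf.irrefl e ((inConflict_etaFlow_iff hES).1 h)

end Eta

theorem stmt13_general {E : Type*} (le conf : E → E → Prop) (hES : IsEventStructure le conf)
    (hcauses : ∀ e, {f | le f e}.Finite) (hconflicts : ∀ e, {f | conf e f}.Finite) :
    IsOccurrenceNet (EtaFlow le conf) ∧
    (∀ e e' : E, ReflTransGen (EtaFlow le conf) (inr e) (inr e') ↔ le e e') ∧
    (∀ e e' : E, InConflict (EtaFlow le conf) (inr e) (inr e') ↔ conf e e') :=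
  have := hES.isPartialOrder
  ⟨isOccurrenceNet_etaFlow hES hcauses hconflicts, fun _ _ => reflTransGen_etaFlow_iff,
    fun _ _ => inConflict_etaFlow_iff hES⟩

/-- For a finite nonempty event structure `ℰ = (E, ≤, ⊕)`, the
constructed net `η[ℰ]` (whose events are exactly those of `ℰ`) is an occurrence
net with `ξ[η[ℰ]] = ℰ` : causality restricted to events equals `≤` and conflict
restricted to events equals `⊕`. -/
theorem stmt13 {E : Type*} [Finite E] [Nonempty E] (le conf : E → E → Prop)
    (hES : IsEventStructure le conf) :
    IsOccurrenceNet (EtaFlow le conf) ∧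
    (∀ e e' : E, ReflTransGen (EtaFlow le conf) (inr e) (inr e') ↔ le e e') ∧
    (∀ e e' : E, InConflict (EtaFlow le conf) (inr e) (inr e') ↔ conf e e') :=
  stmt13_general le conf hES (fun _ => Set.toFinite _) fun _ => Set.toFinite _
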